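/- arXiv:2103.00277 — 2 statements merged into one kernel-verified Lean document; each statement's English description precedes it below -/
import Mathlib

section
/- Assume additionally that G has trivial null space (equivalently, Gᵀ Σ_η⁻¹ G is symmetric positive definite). Then the covariance matrices of the linear UKI iteration converge to the posterior covariance with an uninformative prior: C_n → (Gᵀ Σ_η⁻¹ G)⁻¹ as n → ∞. -/
open Matrix Filter

lemma uki_step {Nθ Ny : ℕ}
    (G : Matrix (Fin Ny) (Fin Nθ) ℝ)
    (Sη : Matrix (Fin Ny) (Fin Ny) ℝ) (hSη : Sη.PosDef)
    (A : Matrix (Fin Nθ) (Fin Nθ) ℝ) (hA : A.PosDef) :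
    ((2 : ℝ) • A -
        ((2 : ℝ) • A) * Gᵀ * (G * ((2 : ℝ) • A) * Gᵀ + (2 : ℝ) • Sη)⁻¹ * G *
          ((2 : ℝ) • A)) = ((2 : ℝ)⁻¹ • (A⁻¹ + Gᵀ * Sη⁻¹ * G))⁻¹ := by
  have h2 : (0 : ℝ) < 2 := by norm_num
  have hA2 : ((2 : ℝ) • A).PosDef := hA.smul h2
  have hS2 : ((2 : ℝ) • Sη).PosDef := hSη.smul h2
  have hsum : ((2 : ℝ) • Sη + G * ((2 : ℝ) • A) * Gᵀ).PosDef := by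
    have := hA2.posSemidef.mul_mul_conjTranspose_same G
    rw [conjTranspose_eq_transpose_of_trivial] at this
    exact hS2.add_posSemidef this
  have iA : ((2 : ℝ) • A)⁻¹ = (2 : ℝ)⁻¹ • A⁻¹ := by
    apply Matrix.inv_eq_left_inv
    rw [Matrix.smul_mul, Matrix.mul_smul, smul_smul, Matrix.nonsing_inv_mul _ ((Matrix.isUnit_iff_isUnit_det _).1 hA.isUnit)]
    norm_num
  have iS : ((2 : ℝ) • Sη)⁻¹ = (2 : ℝ)⁻¹ • Sη⁻¹ := by
    apply Matrix.inv_eq_left_inv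
    rw [Matrix.smul_mul, Matrix.mul_smul, smul_smul, Matrix.nonsing_inv_mul _ ((Matrix.isUnit_iff_isUnit_det _).1 hSη.isUnit)]
    norm_num
  have dA := (Matrix.isUnit_iff_isUnit_det _).1 hA2.isUnit
  have dS := (Matrix.isUnit_iff_isUnit_det _).1 hS2.isUnit
  have w := Matrix.add_mul_mul_inv_eq_sub (((2 : ℝ) • A)⁻¹) Gᵀ (((2 : ℝ) • Sη)⁻¹) G
    hA2.inv.isUnit hS2.inv.isUnit
    (by rw [Matrix.nonsing_inv_nonsing_inv _ dA, Matrix.nonsing_inv_nonsing_inv _ dS]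
        exact hsum.isUnit)
  rw [Matrix.nonsing_inv_nonsing_inv _ dA, Matrix.nonsing_inv_nonsing_inv _ dS, iA, iS] at w
  rw [add_comm (G * ((2 : ℝ) • A) * Gᵀ), ← w]
  simp only [smul_add, Matrix.mul_smul, Matrix.smul_mul]

/-- **Convergence of the linear UKI covariances to the posterior covariance.** If `G` has trivial
null space (equivalently `Gᵀ Σ_η⁻¹ G` is symmetric positive definite), then the linear UKI
covariance iteration (with `Σ_ω = C_n`, `Σ_ν = 2Σ_η`) satisfies
`C_n → (Gᵀ Σ_η⁻¹ G)⁻¹` as `n → ∞`. -/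
theorem linear_uki_covariance_convergence {Nθ Ny : ℕ}
    (G : Matrix (Fin Ny) (Fin Nθ) ℝ)
    (Sη : Matrix (Fin Ny) (Fin Ny) ℝ) (hSη : Sη.PosDef)
    (hG : (Gᵀ * Sη⁻¹ * G).PosDef)
    (C : ℕ → Matrix (Fin Nθ) (Fin Nθ) ℝ) (hC0 : (C 0).PosDef)
    (hrec : ∀ n, C (n + 1) =
      (2 : ℝ) • C n -
        ((2 : ℝ) • C n) * Gᵀ * (G * ((2 : ℝ) • C n) * Gᵀ + (2 : ℝ) • Sη)⁻¹ * G *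
          ((2 : ℝ) • C n)) :
    Tendsto (fun n => C n) atTop (nhds (Gᵀ * Sη⁻¹ * G)⁻¹) := by
  have key : ∀ n, (C n).PosDef ∧ (C n)⁻¹ =
      Gᵀ * Sη⁻¹ * G + ((2 : ℝ)⁻¹ ^ n) • ((C 0)⁻¹ - Gᵀ * Sη⁻¹ * G) := by
    intro n
    induction n with
    | zero => exact ⟨hC0, by simp⟩
    | succ n ih =>
      obtain ⟨hp, hi⟩ := ih
      have h := (hrec n).trans (uki_step G Sη hSη (C n) hp)
      have hP : ((2 : ℝ)⁻¹ • ((C n)⁻¹ + Gᵀ * Sη⁻¹ * G)).PosDef :=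
        (hp.inv.add hG).smul (by norm_num)
      refine ⟨h ▸ hP.inv, ?_⟩
      rw [h, Matrix.nonsing_inv_nonsing_inv _ ((Matrix.isUnit_iff_isUnit_det _).1 hP.isUnit), hi]
      module
  have hC : (fun n => C n) = fun n =>
      (Gᵀ * Sη⁻¹ * G + ((2 : ℝ)⁻¹ ^ n) • ((C 0)⁻¹ - Gᵀ * Sη⁻¹ * G))⁻¹ := by
    funext n
    rw [← (key n).2,
      Matrix.nonsing_inv_nonsing_inv _ ((Matrix.isUnit_iff_isUnit_det _).1 (key n).1.isUnit)]
  rw [hC]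
  have hdet := hG.det_pos.ne'
  have hlim : Tendsto (fun n : ℕ =>
      Gᵀ * Sη⁻¹ * G + ((2 : ℝ)⁻¹ ^ n) • ((C 0)⁻¹ - Gᵀ * Sη⁻¹ * G)) atTop
      (nhds (Gᵀ * Sη⁻¹ * G)) := by
    have h0 : Tendsto (fun n : ℕ => (2 : ℝ)⁻¹ ^ n) atTop (nhds 0) :=
      tendsto_pow_atTop_nhds_zero_of_lt_one (by norm_num) (by norm_num)
    simpa using (h0.smul_const ((C 0)⁻¹ - Gᵀ * Sη⁻¹ * G)).const_add (Gᵀ * Sη⁻¹ * G)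
  have hcont : ContinuousAt Inv.inv (Gᵀ * Sη⁻¹ * G) := by
    apply continuousAt_matrix_inv
    rw [Ring.inverse_eq_inv']
    exact continuousAt_inv₀ hdet
  exact hcont.tendsto.comp hlim
end

section
/- For every n ≥ 1, the precision matrices of the linear UKI iteration satisfy the Loewner-order sandwich bound ½ Gᵀ Σ_η⁻¹ G ⪯ C_n⁻¹ ⪯ ½ Gᵀ Σ_η⁻¹ G + Σ_+, where Σ_+ := ½ Gᵀ Σ_η⁻¹ G + C_0⁻¹. -/
open Matrix

theorem uki_step_s6 {p q : ℕ} (G : Matrix (Fin q) (Fin p) ℝ)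
    (S : Matrix (Fin q) (Fin q) ℝ) (hS : S.PosDef)
    (P : Matrix (Fin p) (Fin p) ℝ) (hP : P.PosDef) :
    P - P * Gᵀ * (G * P * Gᵀ + S)⁻¹ * G * P = (P⁻¹ + Gᵀ * S⁻¹ * G)⁻¹ := by
  have hSd := (Matrix.isUnit_iff_isUnit_det _).1 hS.isUnit
  have hPd := (Matrix.isUnit_iff_isUnit_det _).1 hP.isUnit
  have h1 : (G * P * Gᵀ).PosSemidef := by
    simpa using hP.posSemidef.mul_mul_conjTranspose_same G
  have h2 : IsUnit (S + G * P * Gᵀ) := (hS.add_posSemidef h1).isUnit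
  have := Matrix.add_mul_mul_inv_eq_sub P⁻¹ Gᵀ S⁻¹ G hP.inv.isUnit hS.inv.isUnit
    (by rwa [Matrix.nonsing_inv_nonsing_inv _ hSd, Matrix.nonsing_inv_nonsing_inv _ hPd])
  rw [this, Matrix.nonsing_inv_nonsing_inv _ hSd, Matrix.nonsing_inv_nonsing_inv _ hPd,
    add_comm S]

theorem inv_two_smul {p : ℕ} (P : Matrix (Fin p) (Fin p) ℝ) (hP : P.PosDef) :
    ((2 : ℝ) • P)⁻¹ = (2 : ℝ)⁻¹ • P⁻¹ := by
  have hPd := (Matrix.isUnit_iff_isUnit_det _).1 hP.isUnit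
  apply Matrix.inv_eq_right_inv
  rw [Matrix.smul_mul, Matrix.mul_smul, smul_smul, Matrix.mul_nonsing_inv _ hPd]
  norm_num

/-- **Sandwich bound for the linear UKI precision matrices.** For the linear UKI covariance
iteration (with `Σ_ω = C_n`, `Σ_ν = 2Σ_η`) and every `n ≥ 1`, the precision matrix satisfies
`½ Gᵀ Σ_η⁻¹ G ⪯ C_n⁻¹ ⪯ ½ Gᵀ Σ_η⁻¹ G + Σ_+` with `Σ_+ = ½ Gᵀ Σ_η⁻¹ G + C_0⁻¹` in the
Loewner order. -/
theorem linear_uki_precision_sandwich {Nθ Ny : ℕ}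
    (G : Matrix (Fin Ny) (Fin Nθ) ℝ)
    (Sη : Matrix (Fin Ny) (Fin Ny) ℝ) (hSη : Sη.PosDef)
    (C : ℕ → Matrix (Fin Nθ) (Fin Nθ) ℝ) (hC0 : (C 0).PosDef)
    (hrec : ∀ n, C (n + 1) =
      (2 : ℝ) • C n -
        ((2 : ℝ) • C n) * Gᵀ * (G * ((2 : ℝ) • C n) * Gᵀ + (2 : ℝ) • Sη)⁻¹ * G *
          ((2 : ℝ) • C n)) :
    ∀ n, 1 ≤ n →
      ((C n)⁻¹ - (2 : ℝ)⁻¹ • (Gᵀ * Sη⁻¹ * G)).PosSemidef ∧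
      (((2 : ℝ)⁻¹ • (Gᵀ * Sη⁻¹ * G) + ((2 : ℝ)⁻¹ • (Gᵀ * Sη⁻¹ * G) + (C 0)⁻¹)) -
        (C n)⁻¹).PosSemidef := by
  have hM : (Gᵀ * Sη⁻¹ * G).PosSemidef := by
    simpa using hSη.inv.posSemidef.conjTranspose_mul_mul_same G
  have key : ∀ n, (C n).PosDef ∧
      (C n)⁻¹ = ((2 : ℝ)⁻¹ ^ n) • (C 0)⁻¹ + (1 - (2 : ℝ)⁻¹ ^ n) • (Gᵀ * Sη⁻¹ * G) := by
    intro n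
    induction n with
    | zero => exact ⟨hC0, by simp⟩
    | succ n ih =>
      obtain ⟨hp, he⟩ := ih
      have hs := uki_step_s6 G ((2 : ℝ) • Sη) (hSη.smul two_pos) ((2 : ℝ) • C n) (hp.smul two_pos)
      rw [← hrec n, inv_two_smul _ hp, inv_two_smul _ hSη, Matrix.mul_smul, Matrix.smul_mul] at hs
      have hq : ((2 : ℝ)⁻¹ • (C n)⁻¹ + (2 : ℝ)⁻¹ • (Gᵀ * Sη⁻¹ * G)).PosDef :=
        (hp.inv.smul (by norm_num)).add_posSemidef (hM.smul (by norm_num))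
      refine ⟨hs ▸ hq.inv, ?_⟩
      rw [hs, Matrix.nonsing_inv_nonsing_inv _ ((Matrix.isUnit_iff_isUnit_det _).1 hq.isUnit), he]
      module
  intro n hn
  have h0 : (0 : ℝ) ≤ (2 : ℝ)⁻¹ ^ n := by positivity
  have h1 : (2 : ℝ)⁻¹ ^ n ≤ (2 : ℝ)⁻¹ := by
    simpa using pow_le_pow_of_le_one (by norm_num : (0 : ℝ) ≤ 2⁻¹) (by norm_num) hn
  have h2 : (2 : ℝ)⁻¹ = 1 / 2 := by norm_num
  rw [(key n).2]
  generalize (2 : ℝ)⁻¹ ^ n = r at *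
  have hC := hC0.inv.posSemidef
  generalize Gᵀ * Sη⁻¹ * G = M at *
  constructor
  · have := (hC.smul h0).add (hM.smul (show 0 ≤ (2 : ℝ)⁻¹ - r by linarith))
    refine (congrArg Matrix.PosSemidef ?_).mpr this
    module
  · have := (hC.smul (show 0 ≤ 1 - r by linarith)).add (hM.smul h0)
    refine (congrArg Matrix.PosSemidef ?_).mpr this
    module
end
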